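/- Let n ≥ 0, 0 < β < ρ < 1, λ := ρ − β, 0 < a < 1, α := −Φ⁻¹(a), and 0 < ε ≤ e^{−α² · max(0, β/(2λ) − 1/2)}. Then there exists a measurable set Ω ⊆ ℝ^{n+1} maximizing Problem 2z, i.e. a measurable Ω such that F(Ω) ≥ F(Ω̃) for every measurable Ω̃ ⊆ ℝ^{n+1}, where F(Ω) := ∫ 1_Ω(x) T_ρ1_Ω(x) dγ_{n+1}(x) − ε (∫_Ω Φ((β⟨ν(z(Ω)), x⟩ − α)/√(1−β²)) dγ_{n+1}(x))² − 2(1+|α|)|γ_{n+1}(Ω) − a|. -/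

import Mathlib

/-!
For `Ω` with `ν(z(Ω)) = e` the objective is `⟨f, T_ρ f⟩ - ε ⟨f, g⟩² - 2(1+|α|) |∫ f - a|` at
`f = 1_Ω`, where `g(x) = Φ((β⟨e, x⟩ - α)/√(1-β²))`. Since `g = T_{√ρ} w` with
`w(x) = Φ((b⟨e, x⟩ - α)/√(1-b²))`, `b = β/√ρ`, and `0 ≤ w ≤ 1`, Cauchy–Schwarz gives
`⟨f, g⟩² = ⟨T_{√ρ} f, w⟩² ≤ ‖T_{√ρ} f‖² = ⟨f, T_ρ f⟩`. The upper bound on `ε` yields `ε ≤ 1`, so the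
quadratic part is a *convex* function of `f` (`quad_nonneg`).

By rotation invariance of the Gaussian measure (`exists_rotation`) only sets whose barycenter is a
nonnegative multiple of `e = (1, 0, …, 0)` need to be considered, and for all of them, including
those with zero barycenter, `ν(z(Ω)) = e`. Relax `1_Ω` to functions `f` with values in `[0,1]`,
viewed as functionals on `L²`. They form a weak-star compact set (`isCompact_unitFunctionals`), the
barycenter constraint is closed, and the relaxed objective is weak-star continuous on it, because
`T_{√ρ} f (z)` is the pairing of `f` with a square-integrable kernel (`continuousOn_relaxedForm`).
Hence it has a maximizer `φ₀`.

The functionals with the same integral and barycenter as `φ₀` that maximize the quadratic part form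
a compact set, which has an extreme point by the Krein–Milman theorem; let `f` represent it. If `f`
were not an indicator, some nonzero `h` with `|h| ≤ min f (1 - f)` would have vanishing integral and
first moments (`exists_perturbation`). By convexity `f + h` and `f - h` would again be maximizers,
contradicting extremality (`exists_set_functional`). So `f` is the indicator of a set, and this set
is a maximizer of the original objective.
-/

open MeasureTheory Real Set Filter
open scoped RealInnerProductSpace ENNReal

noncomputable section

/-- `ℝ^k` with the Euclidean structure. -/
abbrev Euc (k : ℕ) : Type := EuclideanSpace ℝ (Fin k)

/-- Standard Gaussian density on `ℝ^k`. -/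
def gaussDensity (k : ℕ) (x : Euc k) : ℝ :=
  (2 * π) ^ (-(k : ℝ) / 2) * Real.exp (-‖x‖ ^ 2 / 2)

/-- Standard Gaussian measure on `ℝ^k`. -/
def gaussMeasure (k : ℕ) : Measure (Euc k) :=
  volume.withDensity fun x => ENNReal.ofReal (gaussDensity k x)

/-- Ornstein–Uhlenbeck operator with correlation `ρ`. -/
def ouOp (k : ℕ) (ρ : ℝ) (f : Euc k → ℝ) (x : Euc k) : ℝ :=
  ∫ y, f (ρ • x + Real.sqrt (1 - ρ ^ 2) • y) ∂(gaussMeasure k)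

/-- Noise stability of a set with correlation `ρ`. -/
def noiseStability (k : ℕ) (ρ : ℝ) (Ω : Set (Euc k)) : ℝ :=
  ∫ x, Ω.indicator (fun _ => (1 : ℝ)) x * ouOp k ρ (Ω.indicator fun _ => (1 : ℝ)) x
    ∂(gaussMeasure k)

/-- A half space: `{x : ⟨x,u⟩ > t}` for a unit vector `u`. -/
def IsHalfSpace (k : ℕ) (H : Set (Euc k)) : Prop :=
  ∃ (u : Euc k) (t : ℝ), ‖u‖ = 1 ∧ H = {x | t < ⟪x, u⟫}

/-- The standard Gaussian cumulative distribution function. -/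
def Phi (t : ℝ) : ℝ := ∫ s in Iio t, (2 * π) ^ (-(1 : ℝ) / 2) * Real.exp (-s ^ 2 / 2)

/-- The Gaussian barycenter of `Ω ⊆ ℝ^k`. -/
def bary (k : ℕ) (Ω : Set (Euc k)) : Euc k := ∫ x in Ω, x ∂(gaussMeasure k)

open Classical in
/-- `ν(z) = z/‖z‖` for `z ≠ 0`, and `ν(0) = (1,0,…,0)`. -/
def nuVec (n : ℕ) (z : Euc (n + 1)) : Euc (n + 1) :=
  if z = 0 then EuclideanSpace.single 0 1 else ‖z‖⁻¹ • z

/-- The penalty functional `∫_Ω Φ((β⟨ν(z(Ω)),x⟩ − α)/√(1−β²)) dγ_{n+1}`. -/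
def penaltyFun (n : ℕ) (β α : ℝ) (Ω : Set (Euc (n + 1))) : ℝ :=
  ∫ x in Ω, Phi ((β * ⟪nuVec n (bary (n + 1) Ω), x⟫ - α) / Real.sqrt (1 - β ^ 2))
    ∂(gaussMeasure (n + 1))

/-- The objective functional of Problem 2z: noise stability with penalties and
volume-penalization term. -/
def problem2zFun (n : ℕ) (ρ β α ε a : ℝ) (Ω : Set (Euc (n + 1))) : ℝ :=
  noiseStability (n + 1) ρ Ω - ε * (penaltyFun n β α Ω) ^ 2
    - 2 * (1 + |α|) * |(gaussMeasure (n + 1) Ω).toReal - a|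

/-! ### The Gaussian measure -/

lemma integrable_gaussDensity (k : ℕ) : Integrable (gaussDensity k) := by
  have h := (GaussianFourier.integrable_cexp_neg_mul_sq_norm_add (V := Euc k)
    (b := (1 / 2 : ℂ)) (by norm_num) 0 0).norm
  refine (h.const_mul ((2 * π) ^ (-(k : ℝ) / 2))).congr (Eventually.of_forall fun x => ?_)
  simp only [gaussDensity, Complex.norm_exp]
  congr 2
  simp [← Complex.ofReal_pow]
  ring

lemma gaussDensity_pos (k : ℕ) (x : Euc k) : 0 < gaussDensity k x := by
  unfold gaussDensity; positivity

lemma measurable_gaussDensity (k : ℕ) : Measurable (gaussDensity k) := by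
  unfold gaussDensity; fun_prop

lemma isFiniteMeasure_gaussMeasure (k : ℕ) : IsFiniteMeasure (gaussMeasure k) := by
  refine isFiniteMeasure_withDensity_ofReal (integrable_gaussDensity k).2

lemma integral_gaussMeasure (k : ℕ) {F : Type*} [NormedAddCommGroup F] [NormedSpace ℝ F]
    (f : Euc k → F) :
    ∫ x, f x ∂(gaussMeasure k) = ∫ x, gaussDensity k x • f x := by
  unfold gaussMeasure
  rw [integral_withDensity_eq_integral_toReal_smul]
  · congr 1 with x
    rw [ENNReal.toReal_ofReal (gaussDensity_pos k x).le]
  · exact (measurable_gaussDensity k).ennreal_ofReal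
  · simp

/-- The density description agrees with Mathlib's standard Gaussian measure. -/
lemma gaussMeasure_eq (k : ℕ) : gaussMeasure k = ProbabilityTheory.stdGaussian (Euc k) := by
  have := isFiniteMeasure_gaussMeasure k
  apply Measure.ext_of_charFun
  ext t
  rw [ProbabilityTheory.charFun_stdGaussian, charFun_apply, integral_gaussMeasure]
  have h := GaussianFourier.integral_cexp_neg_mul_sq_norm_add (V := Euc k)
    (b := (1 / 2 : ℂ)) (by norm_num) Complex.I t
  have e : ∀ x : Euc k, gaussDensity k x • Complex.exp (⟪x, t⟫ * Complex.I)
      = (((2 * π) ^ (-(k : ℝ) / 2) : ℝ) : ℂ) *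
        Complex.exp (-(1 / 2 : ℂ) * ‖x‖ ^ 2 + Complex.I * ⟪t, x⟫) := by
    intro x
    rw [gaussDensity, Complex.real_smul, Complex.ofReal_mul, mul_assoc, Complex.ofReal_exp,
      ← Complex.exp_add, real_inner_comm]
    congr 2
    push_cast
    ring
  simp_rw [e]
  rw [integral_const_mul, h, ← mul_assoc]
  have h2 : (((2 * π) ^ (-(k : ℝ) / 2) : ℝ) : ℂ) *
      (π / (1 / 2 : ℂ)) ^ ((Module.finrank ℝ (Euc k) : ℂ) / 2) = 1 := by
    rw [Complex.ofReal_cpow (by positivity), finrank_euclideanSpace_fin]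
    have : (π / (1 / 2 : ℂ)) = ((2 * π : ℝ) : ℂ) := by push_cast; ring
    rw [this, ← Complex.cpow_add]
    · have : ((-(k : ℝ) / 2 : ℝ) : ℂ) + (k : ℂ) / 2 = 0 := by push_cast; ring
      rw [this, Complex.cpow_zero]
    · exact_mod_cast (by positivity : (2 * π : ℝ) ≠ 0)
  rw [h2, one_mul]
  congr 1
  rw [Complex.I_sq]
  ring

instance (k : ℕ) : IsProbabilityMeasure (gaussMeasure k) := by
  rw [gaussMeasure_eq]; infer_instance

instance (k : ℕ) : ProbabilityTheory.IsGaussian (gaussMeasure k) := by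
  rw [gaussMeasure_eq]; infer_instance

lemma gaussMeasure_ac (k : ℕ) : gaussMeasure k ≪ volume := withDensity_absolutelyContinuous _ _

lemma measurePreserving_gauss {k : ℕ} (R : Euc k ≃ₗᵢ[ℝ] Euc k) :
    MeasurePreserving R (gaussMeasure k) (gaussMeasure k) := by
  refine ⟨R.continuous.measurable, ?_⟩
  rw [gaussMeasure_eq]
  exact ProbabilityTheory.stdGaussian_map R

/-- Gaussian vectors with a common component `Z` have the joint law of a `r₁ r₂`-correlated
pair. The signs of the coefficients are free, which is used with a negative `c`. -/
lemma gauss_correlated_law (k : ℕ) {r₁ s₁ r₂ s₂ c : ℝ} (h₁ : r₁ ^ 2 + s₁ ^ 2 = 1)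
    (h₂ : r₂ ^ 2 + s₂ ^ 2 = 1) (hc : (r₁ * r₂) ^ 2 + c ^ 2 = 1) :
    ((gaussMeasure k).prod ((gaussMeasure k).prod (gaussMeasure k))).map
      (fun p : Euc k × Euc k × Euc k => (r₁ • p.1 + s₁ • p.2.1, r₂ • p.1 + s₂ • p.2.2)) =
    ((gaussMeasure k).prod (gaussMeasure k)).map
      (fun p : Euc k × Euc k => (p.1, (r₁ * r₂) • p.1 + c • p.2)) := by
  let A : Euc k × Euc k × Euc k →L[ℝ] Euc k × Euc k :=
    ContinuousLinearMap.prod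
      (r₁ • ContinuousLinearMap.fst ℝ _ _ + s₁ • (ContinuousLinearMap.fst ℝ _ _).comp
        (ContinuousLinearMap.snd ℝ _ _))
      (r₂ • ContinuousLinearMap.fst ℝ _ _ + s₂ • (ContinuousLinearMap.snd ℝ _ _).comp
        (ContinuousLinearMap.snd ℝ _ _))
  let B : Euc k × Euc k →L[ℝ] Euc k × Euc k :=
    ContinuousLinearMap.prod (ContinuousLinearMap.fst ℝ _ _)
      ((r₁ * r₂) • ContinuousLinearMap.fst ℝ _ _ + c • ContinuousLinearMap.snd ℝ _ _)
  change Measure.map A _ = Measure.map B _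
  have hA := Measure.isProbabilityMeasure_map (μ := (gaussMeasure k).prod
    ((gaussMeasure k).prod (gaussMeasure k))) A.continuous.aemeasurable
  have hB := Measure.isProbabilityMeasure_map (μ := (gaussMeasure k).prod (gaussMeasure k))
    B.continuous.aemeasurable
  apply Measure.ext_of_charFunDual
  ext L
  rw [charFunDual_map, charFunDual_map, charFunDual_prod, charFunDual_prod, charFunDual_prod]
  obtain ⟨a, ha⟩ := (InnerProductSpace.toDual ℝ (Euc k)).surjective
    (L.comp (ContinuousLinearMap.inl ℝ _ _))
  obtain ⟨b, hb⟩ := (InnerProductSpace.toDual ℝ (Euc k)).surjective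
    (L.comp (ContinuousLinearMap.inr ℝ _ _))
  have hL : ∀ x y, L (x, y) = ⟪a, x⟫ + ⟪b, y⟫ := by
    intro x y
    have h1 := congrArg (fun l => l x) ha
    have h2 := congrArg (fun l => l y) hb
    simp at h1 h2
    rw [h1, h2, ← map_add]; simp
  have key : ∀ (l : StrongDual ℝ (Euc k)) (v : Euc k), (∀ x, l x = ⟪v, x⟫) →
      charFunDual (gaussMeasure k) l = Complex.exp (-‖v‖ ^ 2 / 2) := by
    intro l v h
    have : l = InnerProductSpace.toDual ℝ (Euc k) v := by ext x; simp [h]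
    rw [gaussMeasure_eq, ProbabilityTheory.charFunDual_stdGaussian, this]; simp
  rw [key _ (r₁ • a + r₂ • b), key _ (s₁ • a), key _ (s₂ • b), key _ (a + (r₁ * r₂) • b),
    key _ (c • b), ← Complex.exp_add, ← Complex.exp_add, ← Complex.exp_add]
  · congr 1
    norm_cast
    simp only [norm_add_sq_real, norm_smul, real_inner_smul_left, real_inner_smul_right, mul_pow,
      Real.norm_eq_abs, sq_abs]
    have e1 : s₁ ^ 2 = 1 - r₁ ^ 2 := by linarith
    have e2 : s₂ ^ 2 = 1 - r₂ ^ 2 := by linarith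
    have e3 : c ^ 2 = 1 - (r₁ * r₂) ^ 2 := by linarith
    rw [e1, e2, e3]
    ring
  all_goals
    intro x
    simp [A, B, hL, inner_add_left, real_inner_smul_left, real_inner_smul_right]

/-! ### The Ornstein–Uhlenbeck operator -/

/-- The density, with respect to the Gaussian measure, of `r • z + √(1 - r²) • Y` where `Y` is a
standard Gaussian vector. -/
def ouKernel (k : ℕ) (r : ℝ) (z y : Euc k) : ℝ :=
  (Real.sqrt (1 - r ^ 2) ^ k)⁻¹ *
    Real.exp (-‖y - r • z‖ ^ 2 / (2 * (1 - r ^ 2)) + ‖y‖ ^ 2 / 2)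

lemma continuous_ouKernel (k : ℕ) (r : ℝ) :
    Continuous (fun p : Euc k × Euc k => ouKernel k r p.1 p.2) := by
  unfold ouKernel; fun_prop

lemma ouKernel_nonneg (k : ℕ) (r : ℝ) (z y : Euc k) : 0 ≤ ouKernel k r z y := by
  unfold ouKernel; positivity

/-- For fixed `z` the kernel is bounded in `y`: the exponent is
`(-‖r y - z‖² + (1 - r²) ‖z‖²) / (2 (1 - r²))`. -/
lemma ouKernel_le (k : ℕ) {r : ℝ} (hr : r ^ 2 < 1) (z y : Euc k) :
    ouKernel k r z y ≤ (Real.sqrt (1 - r ^ 2) ^ k)⁻¹ * Real.exp (‖z‖ ^ 2 / 2) := by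
  unfold ouKernel
  have h : 0 < 1 - r ^ 2 := by linarith
  gcongr
  have h1 := norm_sub_sq_real y (r • z)
  have h2 := norm_sub_sq_real (r • y) z
  rw [norm_smul, real_inner_smul_right, mul_pow, Real.norm_eq_abs, sq_abs] at h1
  rw [norm_smul, real_inner_smul_left, mul_pow, Real.norm_eq_abs, sq_abs] at h2
  have h3 := sq_nonneg ‖r • y - z‖
  have : -‖y - r • z‖ ^ 2 / (2 * (1 - r ^ 2)) ≤ (‖z‖ ^ 2 - ‖y‖ ^ 2) / 2 := by
    rw [div_le_iff₀ (by positivity)]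
    nlinarith
  linarith

lemma ouOp_eq (k : ℕ) {r : ℝ} (hr : r ^ 2 < 1) (f : Euc k → ℝ) (z : Euc k) :
    ouOp k r f z = ∫ y, f y * ouKernel k r z y ∂(gaussMeasure k) := by
  have h : 0 < 1 - r ^ 2 := by linarith
  set s := Real.sqrt (1 - r ^ 2) with hs
  have hs0 : 0 < s := Real.sqrt_pos.2 h
  have hs2 : s ^ 2 = 1 - r ^ 2 := Real.sq_sqrt h.le
  unfold ouOp
  rw [integral_gaussMeasure, integral_gaussMeasure, ← hs]
  have e1 : ∀ y : Euc k, gaussDensity k y • f (r • z + s • y) =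
      (fun u => gaussDensity k (s⁻¹ • u) • f (r • z + u)) (s • y) := by
    intro y; simp only [smul_smul, inv_mul_cancel₀ hs0.ne', one_smul]
  rw [integral_congr_ae (Eventually.of_forall e1), Measure.integral_comp_smul volume
    (fun u => gaussDensity k (s⁻¹ • u) • f (r • z + u)) s]
  rw [← integral_sub_right_eq_self (fun u => gaussDensity k (s⁻¹ • u) • f (r • z + u)) (r • z),
    ← integral_smul]
  congr 1 with y
  simp only [add_sub_cancel, gaussDensity, ouKernel, smul_eq_mul, ← hs2,
    finrank_euclideanSpace_fin, Real.sqrt_sq hs0.le]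
  rw [abs_of_pos (by positivity), norm_smul, Real.norm_eq_abs, abs_inv, abs_of_pos hs0]
  have : Real.exp (-(s⁻¹ * ‖y - r • z‖) ^ 2 / 2) = Real.exp (-‖y‖ ^ 2 / 2) *
      Real.exp (-‖y - r • z‖ ^ 2 / (2 * s ^ 2) + ‖y‖ ^ 2 / 2) := by
    rw [← Real.exp_add]
    congr 1
    field_simp
    ring
  rw [this]
  ring

lemma ouOp_congr (k : ℕ) {r : ℝ} (hr : r ^ 2 < 1) {f g : Euc k → ℝ}
    (h : f =ᵐ[gaussMeasure k] g) : ouOp k r f = ouOp k r g := by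
  ext z
  rw [ouOp_eq k hr, ouOp_eq k hr]
  exact integral_congr_ae (h.mono fun x hx => by simp [hx])

lemma memLp_of_bdd {k : ℕ} {f : Euc k → ℝ} (hf : Measurable f) {C : ℝ} (hC : ∀ x, |f x| ≤ C)
    (p : ℝ≥0∞) : MemLp f p (gaussMeasure k) :=
  MemLp.of_bound hf.aestronglyMeasurable C (Eventually.of_forall hC)

lemma memLp_ouKernel (k : ℕ) {r : ℝ} (hr : r ^ 2 < 1) (z : Euc k) (p : ℝ≥0∞) :
    MemLp (ouKernel k r z) p (gaussMeasure k) := by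
  refine memLp_of_bdd (C := (Real.sqrt (1 - r ^ 2) ^ k)⁻¹ * Real.exp (‖z‖ ^ 2 / 2)) ?_
    (fun y => ?_) p
  · exact ((continuous_ouKernel k r).comp (Continuous.prodMk_right z)).measurable
  · exact (abs_of_nonneg (ouKernel_nonneg k r z y)).le.trans (ouKernel_le k hr z y)

lemma measurable_avg {k : ℕ} {f : Euc k → ℝ} (hf : Measurable f) (r s : ℝ) :
    Measurable (fun z => ∫ y, f (r • z + s • y) ∂(gaussMeasure k)) := by
  have : StronglyMeasurable (fun p : Euc k × Euc k => f (r • p.1 + s • p.2)) :=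
    (hf.comp (by fun_prop)).stronglyMeasurable
  exact this.integral_prod_right.measurable

lemma abs_avg_le {k : ℕ} {f : Euc k → ℝ} {C : ℝ} (hC : ∀ x, |f x| ≤ C) (r s : ℝ) (z : Euc k) :
    |∫ y, f (r • z + s • y) ∂(gaussMeasure k)| ≤ C := by
  have := norm_integral_le_of_norm_le_const (μ := gaussMeasure k)
    (f := fun y => f (r • z + s • y)) (C := C) (Eventually.of_forall fun y => hC _)
  simpa using this

/-- Correlations factor through a common component: for `ρ = r₁ r₂`,
`E[f(X) h(ρX + cY)] = E[E[f(r₁Z + s₁W) | Z] E[h(r₂Z + s₂W) | Z]]`. -/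
lemma correlation_factor {k : ℕ} {r₁ s₁ r₂ s₂ c : ℝ} (h₁ : r₁ ^ 2 + s₁ ^ 2 = 1)
    (h₂ : r₂ ^ 2 + s₂ ^ 2 = 1) (hc : (r₁ * r₂) ^ 2 + c ^ 2 = 1)
    {f h : Euc k → ℝ} (hf : Measurable f) (hh : Measurable h)
    {C D : ℝ} (hC : ∀ x, |f x| ≤ C) (hD : ∀ x, |h x| ≤ D) :
    ∫ x, f x * ∫ y, h ((r₁ * r₂) • x + c • y) ∂(gaussMeasure k) ∂(gaussMeasure k) =
    ∫ z, (∫ w, f (r₁ • z + s₁ • w) ∂(gaussMeasure k)) *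
      (∫ w, h (r₂ • z + s₂ • w) ∂(gaussMeasure k)) ∂(gaussMeasure k) := by
  have hC0 : 0 ≤ C := (abs_nonneg _).trans (hC 0)
  have hm : Measurable (fun p : Euc k × Euc k => f p.1 * h p.2) :=
    (hf.comp measurable_fst).mul (hh.comp measurable_snd)
  have hb : ∀ x y, ‖f x * h y‖ ≤ C * D := fun x y => by
    rw [norm_mul]; exact mul_le_mul (hC x) (hD y) (abs_nonneg _) hC0
  have e1 : ∫ x, f x * ∫ y, h ((r₁ * r₂) • x + c • y) ∂(gaussMeasure k) ∂(gaussMeasure k) =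
      ∫ p, f p.1 * h p.2 ∂(((gaussMeasure k).prod (gaussMeasure k)).map
      (fun p : Euc k × Euc k => (p.1, (r₁ * r₂) • p.1 + c • p.2))) := by
    rw [integral_map (by fun_prop) hm.aestronglyMeasurable, integral_prod]
    · simp_rw [integral_const_mul]
    · refine Integrable.of_bound (C := C * D) ?_ (Eventually.of_forall fun p => hb _ _)
      exact (hm.comp (g := fun p : Euc k × Euc k => f p.1 * h p.2)
        (f := fun p : Euc k × Euc k => (p.1, (r₁ * r₂) • p.1 + c • p.2))
        (by fun_prop)).aestronglyMeasurable
  rw [e1, ← gauss_correlated_law k h₁ h₂ hc,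
    integral_map (by fun_prop) hm.aestronglyMeasurable, integral_prod]
  · congr 1 with z
    exact integral_prod_mul (μ := gaussMeasure k) (ν := gaussMeasure k)
      (fun w => f (r₁ • z + s₁ • w)) (fun w => h (r₂ • z + s₂ • w))
  · refine Integrable.of_bound (C := C * D) ?_ (Eventually.of_forall fun p => hb _ _)
    exact (hm.comp (g := fun p : Euc k × Euc k => f p.1 * h p.2)
      (f := fun p : Euc k × Euc k × Euc k => (r₁ • p.1 + s₁ • p.2.1, r₂ • p.1 + s₂ • p.2.2))
      (by fun_prop)).aestronglyMeasurable

lemma integral_mul_ouOp {k : ℕ} {ρ : ℝ} (h0 : 0 < ρ) (h1 : ρ < 1) {f : Euc k → ℝ}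
    (hf : Measurable f) {C : ℝ} (hC : ∀ x, |f x| ≤ C) :
    ∫ x, f x * ouOp k ρ f x ∂(gaussMeasure k) =
      ∫ z, (ouOp k (Real.sqrt ρ) f z) ^ 2 ∂(gaussMeasure k) := by
  have hs : Real.sqrt ρ * Real.sqrt ρ = ρ := Real.mul_self_sqrt h0.le
  have hr : Real.sqrt ρ ^ 2 + Real.sqrt (1 - Real.sqrt ρ ^ 2) ^ 2 = 1 := by
    rw [Real.sq_sqrt h0.le, Real.sq_sqrt (by linarith)]; ring
  have := correlation_factor (k := k) (c := Real.sqrt (1 - ρ ^ 2)) hr hr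
    (by rw [hs, Real.sq_sqrt (by nlinarith)]; ring) hf hf hC hC
  simp only [hs] at this
  unfold ouOp
  simp_rw [pow_two (∫ y, f _ ∂(gaussMeasure k))]
  exact this

/-! ### The penalty density -/

lemma Phi_eq (t : ℝ) : Phi t = (ProbabilityTheory.gaussianReal 0 1).real (Iio t) := by
  rw [Measure.real, ProbabilityTheory.gaussianReal_apply_eq_integral _ one_ne_zero,
    ENNReal.toReal_ofReal]
  · unfold Phi
    congr 1 with s
    rw [ProbabilityTheory.gaussianPDFReal_def]
    simp only [NNReal.coe_one, mul_one, sub_zero]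
    rw [Real.sqrt_eq_rpow, ← Real.rpow_neg (by positivity)]
    norm_num
  · exact integral_nonneg fun s => ProbabilityTheory.gaussianPDFReal_nonneg _ _ _

lemma monotone_Phi : Monotone Phi := by
  intro s t h
  rw [Phi_eq, Phi_eq]
  exact measureReal_mono (Iio_subset_Iio h)

lemma Phi_nonneg (t : ℝ) : 0 ≤ Phi t := by rw [Phi_eq]; exact measureReal_nonneg

lemma Phi_le_one (t : ℝ) : Phi t ≤ 1 := by rw [Phi_eq]; exact measureReal_le_one

lemma abs_Phi_le (t : ℝ) : |Phi t| ≤ 1 := by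
  rw [abs_of_nonneg (Phi_nonneg t)]; exact Phi_le_one t

lemma Phi_eq_gauss {k : ℕ} {e : Euc k} (he : ‖e‖ = 1) (t : ℝ) :
    Phi t = (gaussMeasure k).real {y | ⟪e, y⟫ < t} := by
  have h : (gaussMeasure k).map (fun y => ⟪e, y⟫) = ProbabilityTheory.gaussianReal 0 1 := by
    have := ProbabilityTheory.IsGaussian.map_eq_gaussianReal (μ := gaussMeasure k)
      (InnerProductSpace.toDual ℝ (Euc k) e)
    rw [gaussMeasure_eq, ProbabilityTheory.variance_dual_stdGaussian,
      ProbabilityTheory.integral_strongDual_stdGaussian] at this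
    have he' : ⇑(InnerProductSpace.toDual ℝ (Euc k) e) = fun y => ⟪e, y⟫ := by ext; simp
    rw [gaussMeasure_eq, ← he', this]
    simp [he]
  rw [Phi_eq, ← h, map_measureReal_apply (by fun_prop) measurableSet_Iio]
  rfl

/-- The penalty density `x ↦ Φ((b⟨e,x⟩ - α)/√(1-b²))`. -/
def pen (k : ℕ) (b α : ℝ) (e x : Euc k) : ℝ := Phi ((b * ⟪e, x⟫ - α) / Real.sqrt (1 - b ^ 2))

lemma measurable_pen (k : ℕ) (b α : ℝ) (e : Euc k) : Measurable (pen k b α e) :=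
  monotone_Phi.measurable.comp (by fun_prop)

lemma abs_pen_le (k : ℕ) (b α : ℝ) (e x : Euc k) : |pen k b α e x| ≤ 1 := abs_Phi_le _

/-- The penalty density is the Ornstein–Uhlenbeck average of a half space. The negative
coefficient spares an appeal to the symmetry of the Gaussian measure. -/
lemma pen_eq {k : ℕ} {b α : ℝ} (hb : b ^ 2 < 1) {e : Euc k} (he : ‖e‖ = 1) (x : Euc k) :
    pen k b α e x = ∫ y, {u : Euc k | α < ⟪e, u⟫}.indicator (fun _ => (1 : ℝ))
      (b • x + (-Real.sqrt (1 - b ^ 2)) • y) ∂(gaussMeasure k) := by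
  have hs : 0 < Real.sqrt (1 - b ^ 2) := Real.sqrt_pos.2 (by linarith)
  rw [pen, Phi_eq_gauss he, ← integral_indicator_one (measurableSet_lt (by fun_prop) (by fun_prop))]
  congr 1 with y
  have : (⟪e, y⟫ < (b * ⟪e, x⟫ - α) / Real.sqrt (1 - b ^ 2)) ↔
      α < ⟪e, b • x + (-Real.sqrt (1 - b ^ 2)) • y⟫ := by
    rw [lt_div_iff₀ hs, inner_add_right, real_inner_smul_right, real_inner_smul_right]
    constructor <;> intro h <;> linarith
  simp only [indicator, mem_ofPred_eq, this, Pi.one_apply]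

/-- The quadratic form `⟨d, T_ρ d⟩ - ε ⟨d, g⟩²` is nonnegative: since `g = T_{√ρ} w` with
`0 ≤ w ≤ 1`, Cauchy–Schwarz gives `⟨d, g⟩² = ⟨T_{√ρ} d, w⟩² ≤ ‖T_{√ρ} d‖² = ⟨d, T_ρ d⟩`. -/
lemma quad_nonneg {k : ℕ} {ρ β α ε : ℝ} (hβ : 0 < β) (hβρ : β < ρ) (hρ : ρ < 1)
    (hε : ε ≤ 1) {e : Euc k} (he : ‖e‖ = 1) {d : Euc k → ℝ} (hd : Measurable d)
    {C : ℝ} (hC : ∀ x, |d x| ≤ C) :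
    ε * (∫ x, d x * pen k β α e x ∂(gaussMeasure k)) ^ 2 ≤
      ∫ z, (ouOp k (Real.sqrt ρ) d z) ^ 2 ∂(gaussMeasure k) := by
  have hρ0 : 0 < ρ := hβ.trans hβρ
  set r := Real.sqrt ρ with hr
  have hr0 : 0 < r := Real.sqrt_pos.2 hρ0
  have hr2 : r ^ 2 = ρ := Real.sq_sqrt hρ0.le
  set b := β / r with hb
  have hrb : r * b = β := by rw [hb]; field_simp
  have hb2 : b ^ 2 < 1 := by
    rw [hb, div_pow, hr2, div_lt_one hρ0]; nlinarith
  have hβ2 : β ^ 2 < 1 := by nlinarith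
  set χ : Euc k → ℝ := {u : Euc k | α < ⟪e, u⟫}.indicator (fun _ => (1 : ℝ)) with hχ
  have hχm : Measurable χ :=
    measurable_const.indicator (measurableSet_lt (by fun_prop) (by fun_prop))
  have hχb : ∀ x, |χ x| ≤ 1 := by
    intro x; rw [hχ]; by_cases h : x ∈ {u : Euc k | α < ⟪e, u⟫} <;> simp [h]
  have key : ∫ x, d x * pen k β α e x ∂(gaussMeasure k) =
      ∫ z, ouOp k r d z * pen k b α e z ∂(gaussMeasure k) := by
    have := correlation_factor (k := k) (r₁ := r) (s₁ := Real.sqrt (1 - r ^ 2)) (r₂ := b)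
      (s₂ := -Real.sqrt (1 - b ^ 2)) (c := -Real.sqrt (1 - β ^ 2))
      (by rw [Real.sq_sqrt (show 0 ≤ 1 - r ^ 2 by linarith)]; ring)
      (by rw [neg_sq, Real.sq_sqrt (by linarith)]; ring)
      (by rw [hrb, neg_sq, Real.sq_sqrt (by linarith)]; ring) hd hχm hC hχb
    rw [hrb] at this
    simp_rw [pen_eq hβ2 he, pen_eq hb2 he]
    exact this
  have hum : Measurable (ouOp k r d) := measurable_avg hd _ _
  have hub : ∀ z, |ouOp k r d z| ≤ C := abs_avg_le hC _ _
  have hC0 : 0 ≤ C := (abs_nonneg _).trans (hC 0)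
  have hpb : ∀ z, |ouOp k r d z * pen k b α e z| ≤ C := fun z => by
    rw [abs_mul]
    exact (mul_le_mul (hub z) (abs_pen_le _ _ _ _ z) (abs_nonneg _) hC0).trans (mul_one C).le
  have hpm : Measurable (fun z => ouOp k r d z * pen k b α e z) := hum.mul (measurable_pen _ _ _ _)
  have h1 : (∫ z, ouOp k r d z * pen k b α e z ∂(gaussMeasure k)) ^ 2 ≤
      ∫ z, (ouOp k r d z * pen k b α e z) ^ 2 ∂(gaussMeasure k) := by
    have := ProbabilityTheory.variance_nonneg (fun z => ouOp k r d z * pen k b α e z)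
      (gaussMeasure k)
    rw [ProbabilityTheory.variance_eq_sub (memLp_of_bdd hpm hpb 2)] at this
    simpa using this
  have h2 : ∫ z, (ouOp k r d z * pen k b α e z) ^ 2 ∂(gaussMeasure k) ≤
      ∫ z, (ouOp k r d z) ^ 2 ∂(gaussMeasure k) := by
    refine integral_mono (memLp_of_bdd hpm hpb 2).integrable_sq
      (memLp_of_bdd hum hub 2).integrable_sq fun z => ?_
    have := abs_pen_le k b α e z
    simp only [mul_pow]
    have h3 : pen k b α e z ^ 2 ≤ 1 := by rw [← sq_abs]; exact pow_le_one₀ (abs_nonneg _) this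
    nlinarith [sq_nonneg (ouOp k r d z)]
  rw [key]
  have h4 := sq_nonneg (∫ z, ouOp k r d z * pen k b α e z ∂(gaussMeasure k))
  nlinarith

/-! ### Weak-star compactness of `[0,1]`-valued functions -/

section Relaxation

variable {α : Type*} [MeasurableSpace α] {μ : Measure α}

/-- A square-integrable function, seen as the element `v ↦ ∫ f v` of the weak dual of `L²`. -/
def toDualL2 (f : α → ℝ) (hf : MemLp f 2 μ) : WeakDual ℝ (Lp ℝ 2 μ) :=
  StrongDual.toWeakDual (InnerProductSpace.toDual ℝ (Lp ℝ 2 μ) (hf.toLp f))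

lemma toDualL2_toLp {f g : α → ℝ} (hf : MemLp f 2 μ) (hg : MemLp g 2 μ) :
    toDualL2 f hf (hg.toLp g) = ∫ x, f x * g x ∂μ := by
  change ⟪hf.toLp f, hg.toLp g⟫ = _
  rw [L2.inner_def]
  refine integral_congr_ae ?_
  filter_upwards [hf.coeFn_toLp, hg.coeFn_toLp] with x h1 h2
  rw [h1, h2]
  simp [mul_comm]

lemma toDualL2_congr {f g : α → ℝ} (hf : MemLp f 2 μ) (hg : MemLp g 2 μ) (h : f =ᵐ[μ] g) :
    toDualL2 f hf = toDualL2 g hg := by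
  unfold toDualL2
  rw [(MemLp.toLp_eq_toLp_iff hf hg).2 h]

lemma toDualL2_injective {f g : α → ℝ} (hf : MemLp f 2 μ) (hg : MemLp g 2 μ)
    (h : toDualL2 f hf = toDualL2 g hg) : f =ᵐ[μ] g := by
  unfold toDualL2 at h
  rw [← MemLp.toLp_eq_toLp_iff hf hg]
  exact (InnerProductSpace.toDual ℝ (Lp ℝ 2 μ)).injective (StrongDual.toWeakDual.injective h)

lemma toDualL2_add {f g : α → ℝ} (hf : MemLp f 2 μ) (hg : MemLp g 2 μ) :
    toDualL2 (f + g) (hf.add hg) = toDualL2 f hf + toDualL2 g hg := by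
  unfold toDualL2
  rw [MemLp.toLp_add, map_add, map_add]

variable [IsProbabilityMeasure μ]

lemma memLp_unit {f : α → ℝ} (hf : Measurable f) (h0 : ∀ x, 0 ≤ f x) (h1 : ∀ x, f x ≤ 1) :
    MemLp f 2 μ :=
  MemLp.of_bound hf.aestronglyMeasurable 1 (Eventually.of_forall fun x => by
    rw [Real.norm_eq_abs, abs_of_nonneg (h0 x)]; exact h1 x)

variable (μ) in
/-- The functionals in the weak dual of `L²(μ)` represented by functions with values in `[0,1]`,
described by their values on indicators. -/
def unitFunctionals : Set (WeakDual ℝ (Lp ℝ 2 μ)) :=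
  {φ | ∀ (s : Set α) (hs : MeasurableSet s),
    0 ≤ φ (indicatorConstLp 2 hs (measure_ne_top μ s) (1 : ℝ)) ∧
    φ (indicatorConstLp 2 hs (measure_ne_top μ s) (1 : ℝ)) ≤ μ.real s}

lemma toDualL2_mem {f : α → ℝ} (hf : Measurable f) (h0 : ∀ x, 0 ≤ f x) (h1 : ∀ x, f x ≤ 1) :
    toDualL2 f (memLp_unit hf h0 h1) ∈ unitFunctionals μ := by
  intro s hs
  have e : toDualL2 f (memLp_unit (μ := μ) hf h0 h1)
      (indicatorConstLp 2 hs (measure_ne_top μ s) (1 : ℝ)) = ∫ x in s, f x ∂μ := by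
    change ⟪(memLp_unit hf h0 h1).toLp f, _⟫ = _
    rw [real_inner_comm, L2.inner_indicatorConstLp_one]
    refine setIntegral_congr_ae hs ?_
    filter_upwards [(memLp_unit (μ := μ) hf h0 h1).coeFn_toLp] with x hx _
    exact hx
  rw [e]
  refine ⟨integral_nonneg h0, ?_⟩
  have hi : Integrable f μ := (memLp_unit hf h0 h1).integrable one_le_two
  calc ∫ x in s, f x ∂μ ≤ ∫ x in s, (1 : ℝ) ∂μ :=
        integral_mono hi.integrableOn (integrable_const _) h1
    _ = μ.real s := by simp

lemma exists_rep {φ : WeakDual ℝ (Lp ℝ 2 μ)} (hφ : φ ∈ unitFunctionals μ) :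
    ∃ (f : α → ℝ) (hf : Measurable f) (h0 : ∀ x, 0 ≤ f x) (h1 : ∀ x, f x ≤ 1),
      φ = toDualL2 f (memLp_unit hf h0 h1) := by
  set F : Lp ℝ 2 μ := (InnerProductSpace.toDual ℝ (Lp ℝ 2 μ)).symm (WeakDual.toStrongDual φ)
    with hF
  have hFφ : ∀ v, φ v = ⟪F, v⟫ := by
    intro v; rw [hF, InnerProductSpace.toDual_symm_apply]; rfl
  have hFi : Integrable F μ := (Lp.memLp F).integrable one_le_two
  have hs : ∀ (s : Set α) (hs : MeasurableSet s),
      φ (indicatorConstLp 2 hs (measure_ne_top μ s) (1 : ℝ)) = ∫ x in s, F x ∂μ := by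
    intro s hs
    rw [hFφ, real_inner_comm, L2.inner_indicatorConstLp_one]
  have hF0 : 0 ≤ᵐ[μ] F := ae_nonneg_of_forall_setIntegral_nonneg hFi fun s hsm _ => by
    rw [← hs s hsm]; exact (hφ s hsm).1
  have hF1 : F ≤ᵐ[μ] fun _ => (1 : ℝ) :=
    ae_le_of_forall_setIntegral_le hFi (integrable_const _) fun s hsm _ => by
      rw [← hs s hsm]; simpa using (hφ s hsm).2
  have hFm : Measurable F := (Lp.stronglyMeasurable F).measurable
  refine ⟨fun x => max 0 (min 1 (F x)), by fun_prop, fun x => le_max_left _ _,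
    fun x => max_le zero_le_one (min_le_left _ _), ?_⟩
  have hae : (fun x => max 0 (min 1 (F x))) =ᵐ[μ] F := by
    filter_upwards [hF0, hF1] with x h0 h1
    simp only [Pi.zero_apply] at h0
    rw [min_eq_right h1, max_eq_right h0]
  have : (memLp_unit (μ := μ) (f := fun x => max 0 (min 1 (F x))) (by fun_prop)
      (fun x => le_max_left _ _) (fun x => max_le zero_le_one (min_le_left _ _))).toLp _ = F := by
    exact ((MemLp.toLp_eq_toLp_iff _ (Lp.memLp F)).2 hae).trans (Lp.toLp_coeFn F (Lp.memLp F))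
  refine DFunLike.ext _ _ fun v => ?_
  rw [hFφ]
  unfold toDualL2
  rw [this]
  rfl

lemma isCompact_unitFunctionals : IsCompact (unitFunctionals μ) := by
  refine (WeakDual.isCompact_closedBall (0 : StrongDual ℝ (Lp ℝ 2 μ)) 1).of_isClosed_subset ?_ ?_
  · have : unitFunctionals μ = ⋂ (s : Set α) (hs : MeasurableSet s),
        (fun φ : WeakDual ℝ (Lp ℝ 2 μ) =>
          φ (indicatorConstLp 2 hs (measure_ne_top μ s) (1 : ℝ))) ⁻¹' Icc 0 (μ.real s) := by
      ext φ; simp [unitFunctionals]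
    rw [this]
    exact isClosed_iInter fun s => isClosed_iInter fun hs =>
      isClosed_Icc.preimage (WeakDual.eval_continuous _)
  · intro φ hφ
    obtain ⟨f, hf, h0, h1, rfl⟩ := exists_rep hφ
    have : ‖(memLp_unit (μ := μ) hf h0 h1).toLp f‖ ≤ 1 := by
      refine (Lp.norm_le_of_ae_bound zero_le_one ?_).trans (by simp [measureUnivNNReal])
      filter_upwards [(memLp_unit (μ := μ) hf h0 h1).coeFn_toLp] with x hx
      rw [hx, Real.norm_eq_abs, abs_of_nonneg (h0 x)]
      exact h1 x
    rw [mem_preimage, mem_closedBall_zero_iff]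
    change ‖InnerProductSpace.toDual ℝ (Lp ℝ 2 μ) ((memLp_unit (μ := μ) hf h0 h1).toLp f)‖ ≤ 1
    rwa [LinearIsometryEquiv.norm_map]

/-- When `L²` is separable, weak-star continuity on `unitFunctionals` may be tested on
sequences. -/
lemma continuousOn_unitFunctionals [TopologicalSpace.SeparableSpace (Lp ℝ 2 μ)]
    {Q : WeakDual ℝ (Lp ℝ 2 μ) → ℝ}
    (h : ∀ (φ : ℕ → WeakDual ℝ (Lp ℝ 2 μ)) (φ' : WeakDual ℝ (Lp ℝ 2 μ)),
      (∀ j, φ j ∈ unitFunctionals μ) → φ' ∈ unitFunctionals μ →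
      (∀ v, Tendsto (fun j => φ j v) atTop (nhds (φ' v))) →
      Tendsto (fun j => Q (φ j)) atTop (nhds (Q φ'))) :
    ContinuousOn Q (unitFunctionals μ) := by
  rw [continuousOn_iff_continuous_domRestrict]
  have := WeakDual.metrizable_of_isCompact ℝ (Lp ℝ 2 μ) _ (isCompact_unitFunctionals (μ := μ))
  rw [continuous_iff_seqContinuous]
  intro φ φ' hφ
  refine h (fun j => φ j) φ' (fun j => (φ j).2) φ'.2 fun v => ?_
  exact (((WeakDual.eval_continuous v).comp continuous_subtype_val).tendsto φ').comp hφ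

end Relaxation

/-! ### The relaxed functional -/

/-- The kernel of the Ornstein–Uhlenbeck operator at `z` as an element of `L²`. -/
def ouKernelL2 (k : ℕ) {r : ℝ} (hr : r ^ 2 < 1) (z : Euc k) : Lp ℝ 2 (gaussMeasure k) :=
  (memLp_ouKernel k hr z 2).toLp

/-- The penalty density as an element of `L²`. -/
def penL2 (k : ℕ) (b α : ℝ) (e : Euc k) : Lp ℝ 2 (gaussMeasure k) :=
  (memLp_of_bdd (measurable_pen k b α e) (abs_pen_le k b α e) 2).toLp

/-- The quadratic form `‖T_r φ‖² - ε φ(g)²` on the weak dual of `L²`, with `g` the penalty density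
in direction `e`. For `r = √ρ` and `φ` represented by `f` it equals `⟨f, T_ρ f⟩ - ε ⟨f, g⟩²`. -/
def relaxedForm (k : ℕ) {r : ℝ} (hr : r ^ 2 < 1) (β α ε : ℝ) (e : Euc k)
    (φ : WeakDual ℝ (Lp ℝ 2 (gaussMeasure k))) : ℝ :=
  ∫ z, (φ (ouKernelL2 k hr z)) ^ 2 ∂(gaussMeasure k) - ε * (φ (penL2 k β α e)) ^ 2

lemma toDualL2_ouKernel {k : ℕ} {r : ℝ} (hr : r ^ 2 < 1) {f : Euc k → ℝ}
    (hf : MemLp f 2 (gaussMeasure k)) (z : Euc k) :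
    toDualL2 f hf (ouKernelL2 k hr z) = ouOp k r f z := by
  rw [ouKernelL2, toDualL2_toLp, ouOp_eq k hr]

lemma toDualL2_pen {k : ℕ} {b α : ℝ} {e : Euc k} {f : Euc k → ℝ}
    (hf : MemLp f 2 (gaussMeasure k)) :
    toDualL2 f hf (penL2 k b α e) = ∫ x, f x * pen k b α e x ∂(gaussMeasure k) := by
  rw [penL2, toDualL2_toLp]

lemma measurable_ouOp {k : ℕ} {f : Euc k → ℝ} (hf : Measurable f) (r : ℝ) :
    Measurable (ouOp k r f) := measurable_avg hf _ _

lemma abs_ouOp_le {k : ℕ} {f : Euc k → ℝ} {C : ℝ} (hC : ∀ x, |f x| ≤ C) (r : ℝ) (z : Euc k) :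
    |ouOp k r f z| ≤ C := abs_avg_le hC _ _ _

lemma continuousOn_relaxedForm (k : ℕ) {r : ℝ} (hr : r ^ 2 < 1) (β α ε : ℝ) (e : Euc k) :
    ContinuousOn (relaxedForm k hr β α ε e) (unitFunctionals (gaussMeasure k)) := by
  have hb : ∀ φ ∈ unitFunctionals (gaussMeasure k),
      Measurable (fun z => φ (ouKernelL2 k hr z)) ∧ ∀ z, |φ (ouKernelL2 k hr z)| ≤ 1 := by
    intro φ hφ
    obtain ⟨f, hf, h0, h1, rfl⟩ := exists_rep hφ
    simp_rw [toDualL2_ouKernel]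
    exact ⟨measurable_ouOp hf r, abs_ouOp_le (fun x => by rw [abs_of_nonneg (h0 x)]; exact h1 x) r⟩
  have : Fact ((2 : ℝ≥0∞) ≠ ∞) := ⟨by simp⟩
  apply continuousOn_unitFunctionals
  intro φ φ' hφ hφ' hlim
  unfold relaxedForm
  refine Tendsto.sub ?_ (((hlim _).pow 2).const_mul ε)
  refine tendsto_integral_of_dominated_convergence (fun _ => (1 : ℝ))
    (fun j => ((hb _ (hφ j)).1.pow_const 2).aestronglyMeasurable) (integrable_const _)
    (fun j => Eventually.of_forall fun z => ?_) (Eventually.of_forall fun z => (hlim _).pow 2)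
  rw [Real.norm_eq_abs, abs_pow]
  exact pow_le_one₀ (abs_nonneg _) ((hb _ (hφ j)).2 z)

/-- Convexity of the relaxed functional, in the form of a second difference. -/
lemma relaxedForm_second_difference {k : ℕ} {ρ β α ε : ℝ} (hr : Real.sqrt ρ ^ 2 < 1) (hβ : 0 < β)
    (hβρ : β < ρ) (hρ : ρ < 1) (hε : ε ≤ 1) {e : Euc k} (he : ‖e‖ = 1)
    {f h : Euc k → ℝ} (hf : Measurable f) (hh : Measurable h)
    {C : ℝ} (hC : ∀ x, |f x| ≤ C) {D : ℝ} (hD : ∀ x, |h x| ≤ D)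
    {φ η φ₁ φ₂ : WeakDual ℝ (Lp ℝ 2 (gaussMeasure k))}
    (hφ : φ = toDualL2 f (memLp_of_bdd hf hC 2)) (hη : η = toDualL2 h (memLp_of_bdd hh hD 2))
    (h₁ : φ₁ = φ + η) (h₂ : φ₂ + η = φ) :
    2 * relaxedForm k hr β α ε e φ ≤ relaxedForm k hr β α ε e φ₁ + relaxedForm k hr β α ε e φ₂ := by
  have hq := quad_nonneg (α := α) hβ hβρ hρ hε he hh hD
  have e1 : ∀ v, φ₁ v = φ v + η v := fun v => by rw [h₁]; rfl
  have e2 : ∀ v, φ₂ v = φ v - η v := fun v => by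
    rw [← h₂, eq_sub_iff_add_eq]; rfl
  have hU : ∀ z, φ (ouKernelL2 k hr z) = ouOp k (Real.sqrt ρ) f z := fun z => by
    rw [hφ, toDualL2_ouKernel]
  have hW : ∀ z, η (ouKernelL2 k hr z) = ouOp k (Real.sqrt ρ) h z := fun z => by
    rw [hη, toDualL2_ouKernel]
  have hp : η (penL2 k β α e) = ∫ x, h x * pen k β α e x ∂(gaussMeasure k) := by
    rw [hη, toDualL2_pen]
  rw [← hp] at hq
  unfold relaxedForm
  simp_rw [e1, e2, hU, hW]
  have mU := memLp_of_bdd (measurable_ouOp hf (Real.sqrt ρ)) (abs_ouOp_le hC _) 2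
  have mW := memLp_of_bdd (measurable_ouOp hh (Real.sqrt ρ)) (abs_ouOp_le hD _) 2
  have hsum : ∫ z, (ouOp k (Real.sqrt ρ) f z + ouOp k (Real.sqrt ρ) h z) ^ 2 ∂(gaussMeasure k) +
      ∫ z, (ouOp k (Real.sqrt ρ) f z - ouOp k (Real.sqrt ρ) h z) ^ 2 ∂(gaussMeasure k) =
      2 * ∫ z, ouOp k (Real.sqrt ρ) f z ^ 2 ∂(gaussMeasure k) +
      2 * ∫ z, ouOp k (Real.sqrt ρ) h z ^ 2 ∂(gaussMeasure k) := by
    have i1 : Integrable (fun z => (ouOp k (Real.sqrt ρ) f z + ouOp k (Real.sqrt ρ) h z) ^ 2)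
        (gaussMeasure k) := (mU.add mW).integrable_sq
    have i2 : Integrable (fun z => (ouOp k (Real.sqrt ρ) f z - ouOp k (Real.sqrt ρ) h z) ^ 2)
        (gaussMeasure k) := (mU.sub mW).integrable_sq
    rw [← integral_add i1 i2,
      ← integral_const_mul, ← integral_const_mul,
      ← integral_add (mU.integrable_sq.const_mul 2) (mW.integrable_sq.const_mul 2)]
    congr 1 with z
    ring
  nlinarith

/-! ### Perturbations with vanishing moments -/

lemma ae_eval_ne_zero (n : ℕ) {p : Polynomial ℝ} (hp : p ≠ 0) :
    ∀ᵐ x ∂(gaussMeasure (n + 1)), p.eval (Real.exp (-‖x‖)) ≠ 0 := by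
  refine (gaussMeasure_ac (n + 1)).ae_le ?_
  have hsub : {x : Euc (n + 1) | ¬ p.eval (Real.exp (-‖x‖)) ≠ 0} ⊆
      ⋃ t ∈ p.roots.toFinset, Metric.sphere (0 : Euc (n + 1)) (-Real.log t) := by
    intro x hx
    simp only [ne_eq, not_not, mem_ofPred_eq] at hx
    simp only [mem_iUnion]
    refine ⟨Real.exp (-‖x‖), ?_, ?_⟩
    · simpa [hp] using hx
    · simp
  refine measure_mono_null hsub ?_
  refine (measure_biUnion_null_iff (Finset.countable_toSet p.roots.toFinset)).2 fun t _ => ?_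
  exact Measure.addHaar_sphere _ _ _

/-- A `[0,1]`-valued function that is not almost everywhere `{0,1}`-valued admits a nonzero
perturbation, staying in `[0,1]` in both directions, with finitely many prescribed vanishing
moments. It is taken of the form `min f (1 - f) · p(exp(-‖x‖))`, `p` a polynomial with more
coefficients than there are moments. -/
lemma exists_perturbation (n : ℕ) {N : ℕ} (v : Fin N → Euc (n + 1) → ℝ)
    (hv : ∀ l, Integrable (v l) (gaussMeasure (n + 1))) {f : Euc (n + 1) → ℝ} (hf : Measurable f)
    (h0 : ∀ x, 0 ≤ f x) (h1 : ∀ x, f x ≤ 1) :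
    ∃ h : Euc (n + 1) → ℝ, Measurable h ∧ (∀ x, |h x| ≤ min (f x) (1 - f x)) ∧
      (∀ l, ∫ x, h x * v l x ∂(gaussMeasure (n + 1)) = 0) ∧
      (h =ᵐ[gaussMeasure (n + 1)] 0 → ∀ᵐ x ∂(gaussMeasure (n + 1)), f x = 0 ∨ f x = 1) := by
  set m : Euc (n + 1) → ℝ := fun x => min (f x) (1 - f x) with hm
  have hmm : Measurable m := by fun_prop
  have hm0 : ∀ x, 0 ≤ m x := fun x => le_min (h0 x) (by linarith [h1 x])
  have hm1 : ∀ x, m x ≤ 1 := fun x => (min_le_left _ _).trans (h1 x)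
  have hτ : ∀ x : Euc (n + 1), |Real.exp (-‖x‖)| ≤ 1 := fun x => by
    rw [abs_of_pos (Real.exp_pos _), Real.exp_le_one_iff]; linarith [norm_nonneg x]
  have hint : ∀ (l : Fin N) (j : Fin (N + 1)),
      Integrable (fun x => m x * Real.exp (-‖x‖) ^ (j : ℕ) * v l x) (gaussMeasure (n + 1)) := by
    intro l j
    refine (hv l).bdd_mul (c := 1) (by fun_prop) (Eventually.of_forall fun x => ?_)
    rw [norm_mul, norm_pow, Real.norm_eq_abs, Real.norm_eq_abs, abs_of_nonneg (hm0 x)]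
    exact mul_le_one₀ (hm1 x) (by positivity) (pow_le_one₀ (abs_nonneg _) (hτ x))
  let M : Matrix (Fin N) (Fin (N + 1)) ℝ := fun l j =>
    ∫ x, m x * Real.exp (-‖x‖) ^ (j : ℕ) * v l x ∂(gaussMeasure (n + 1))
  have hker : LinearMap.ker M.mulVecLin ≠ ⊥ := LinearMap.ker_ne_bot_of_finrank_lt (by simp)
  obtain ⟨c, hc, hc0⟩ := Submodule.exists_mem_ne_zero_of_ne_bot hker
  have hc' : ∀ l, ∑ j, M l j * c j = 0 := fun l => congrFun (LinearMap.mem_ker.1 hc) l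
  set p : Polynomial ℝ := ∑ j : Fin (N + 1), Polynomial.monomial (j : ℕ) (c j) with hp
  have hp0 : p ≠ 0 := by
    intro h
    apply hc0
    ext i
    have := congrArg (fun q => Polynomial.coeff q (i : ℕ)) h
    simpa [hp, Polynomial.finsetSum_coeff, Polynomial.coeff_monomial, Fin.val_inj] using this
  have heval : ∀ t, p.eval t = ∑ j : Fin (N + 1), c j * t ^ (j : ℕ) := fun t => by
    simp [hp, Polynomial.eval_finsetSum]
  set K : ℝ := 1 + ∑ j, |c j| with hK
  have hKpos : 0 < K := by
    have : 0 ≤ ∑ j, |c j| := Finset.sum_nonneg fun j _ => abs_nonneg _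
    linarith
  have hpb : ∀ x : Euc (n + 1), |p.eval (Real.exp (-‖x‖))| ≤ K := by
    intro x
    rw [heval]
    refine (Finset.abs_sum_le_sum_abs _ _).trans ?_
    have : ∑ j : Fin (N + 1), |c j * Real.exp (-‖x‖) ^ (j : ℕ)| ≤ ∑ j, |c j| := by
      refine Finset.sum_le_sum fun j _ => ?_
      rw [abs_mul, abs_pow]
      exact mul_le_of_le_one_right (abs_nonneg _) (pow_le_one₀ (abs_nonneg _) (hτ x))
    linarith
  refine ⟨fun x => m x * (p.eval (Real.exp (-‖x‖)) / K), ?_, fun x => ?_, fun l => ?_, fun hz => ?_⟩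
  · refine hmm.mul (Measurable.div_const ?_ _)
    exact p.continuous.measurable.comp (by fun_prop)
  · rw [abs_mul, abs_of_nonneg (hm0 x), abs_div, abs_of_pos hKpos]
    exact mul_le_of_le_one_right (hm0 x) ((div_le_one hKpos).2 (hpb x))
  · have : ∀ x, m x * (p.eval (Real.exp (-‖x‖)) / K) * v l x =
        ∑ j : Fin (N + 1), (m x * Real.exp (-‖x‖) ^ (j : ℕ) * v l x) * (c j / K) := by
      intro x
      rw [heval, Finset.sum_div, Finset.mul_sum, Finset.sum_mul]
      exact Finset.sum_congr rfl fun j _ => by ring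
    simp_rw [this]
    rw [integral_finsetSum _ fun j _ => (hint l j).mul_const _]
    simp_rw [integral_mul_const, ← mul_div_assoc]
    rw [← Finset.sum_div, hc' l, zero_div]
  · filter_upwards [hz, ae_eval_ne_zero n hp0] with x hx hpx
    have : m x = 0 := by
      rcases mul_eq_zero.1 hx with h | h
      · exact h
      · exact absurd h (div_ne_zero hpx hKpos.ne')
    rcases min_choice (f x) (1 - f x) with h | h
    · left; rw [← h]; exact this
    · right
      have h3 : 1 - f x = 0 := by rw [← h]; exact this
      linarith

/-! ### Coordinates, barycenters and the objective -/

lemma memLp_coord (k : ℕ) (i : Fin k) : MemLp (fun x : Euc k => x i) 2 (gaussMeasure k) :=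
  (ProbabilityTheory.IsGaussian.memLp_two_id (μ := gaussMeasure k)).of_le
    (by fun_prop) (Eventually.of_forall fun x => PiLp.norm_apply_le x i)

lemma memLp_one (k : ℕ) : MemLp (fun _ : Euc k => (1 : ℝ)) 2 (gaussMeasure k) := memLp_const 1

/-- The constant function `1` followed by the coordinate functions. -/
def moment (k : ℕ) (l : Fin (k + 1)) : Euc k → ℝ :=
  Fin.cases (fun _ => 1) (fun i x => x i) l

lemma memLp_moment (k : ℕ) (l : Fin (k + 1)) : MemLp (moment k l) 2 (gaussMeasure k) := by
  refine Fin.cases ?_ (fun i => ?_) l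
  · exact memLp_one k
  · exact memLp_coord k i

/-- The moment functions as elements of `L²`. -/
def momentL2 (k : ℕ) (l : Fin (k + 1)) : Lp ℝ 2 (gaussMeasure k) := (memLp_moment k l).toLp

lemma toDualL2_moment {k : ℕ} {f : Euc k → ℝ} (hf : MemLp f 2 (gaussMeasure k))
    (l : Fin (k + 1)) :
    toDualL2 f hf (momentL2 k l) = ∫ x, f x * moment k l x ∂(gaussMeasure k) := by
  rw [momentL2, toDualL2_toLp]

lemma integral_indicator_mul {k : ℕ} {Ω : Set (Euc k)} (hΩ : MeasurableSet Ω) (g : Euc k → ℝ) :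
    ∫ x, Ω.indicator (fun _ => (1 : ℝ)) x * g x ∂(gaussMeasure k) =
      ∫ x in Ω, g x ∂(gaussMeasure k) := by
  rw [← integral_indicator hΩ]
  congr 1 with x
  by_cases hx : x ∈ Ω <;> simp [hx]

lemma bary_apply {k : ℕ} {Ω : Set (Euc k)} (hΩ : MeasurableSet Ω) (i : Fin k) :
    bary k Ω i = ∫ x, Ω.indicator (fun _ => (1 : ℝ)) x * moment k i.succ x ∂(gaussMeasure k) := by
  have hid : Integrable (fun x : Euc k => x) ((gaussMeasure k).restrict Ω) :=
    (ProbabilityTheory.IsGaussian.integrable_id (μ := gaussMeasure k)).integrableOn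
  rw [integral_indicator_mul hΩ]
  exact ((EuclideanSpace.proj (𝕜 := ℝ) i).integral_comp_comm hid).symm

lemma measurable_one_indicator {k : ℕ} {Ω : Set (Euc k)} (hΩ : MeasurableSet Ω) :
    Measurable (Ω.indicator fun _ => (1 : ℝ)) := measurable_const.indicator hΩ

lemma indicator_one_nonneg {k : ℕ} (Ω : Set (Euc k)) (x : Euc k) :
    0 ≤ Ω.indicator (fun _ => (1 : ℝ)) x := indicator_nonneg (fun _ _ => zero_le_one) x

lemma indicator_one_le {k : ℕ} (Ω : Set (Euc k)) (x : Euc k) :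
    Ω.indicator (fun _ => (1 : ℝ)) x ≤ 1 := indicator_le_self' (fun _ _ => zero_le_one) x

/-- The functional represented by the indicator of a measurable set. -/
def setFunctional {k : ℕ} {Ω : Set (Euc k)} (hΩ : MeasurableSet Ω) :
    WeakDual ℝ (Lp ℝ 2 (gaussMeasure k)) :=
  toDualL2 _ (memLp_unit (measurable_one_indicator hΩ) (indicator_one_nonneg Ω)
    (indicator_one_le Ω))

lemma setFunctional_mem {k : ℕ} {Ω : Set (Euc k)} (hΩ : MeasurableSet Ω) :
    setFunctional hΩ ∈ unitFunctionals (gaussMeasure k) :=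
  toDualL2_mem (measurable_one_indicator hΩ) (indicator_one_nonneg Ω) (indicator_one_le Ω)

lemma setFunctional_succ {k : ℕ} {Ω : Set (Euc k)} (hΩ : MeasurableSet Ω) (i : Fin k) :
    setFunctional hΩ (momentL2 k i.succ) = bary k Ω i := by
  rw [setFunctional, toDualL2_moment, bary_apply hΩ]

lemma setFunctional_zero {k : ℕ} {Ω : Set (Euc k)} (hΩ : MeasurableSet Ω) :
    setFunctional hΩ (momentL2 k 0) = (gaussMeasure k Ω).toReal := by
  rw [setFunctional, toDualL2_moment, integral_indicator_mul hΩ]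
  simp [moment, Measure.real]

/-- The objective with the direction `ν(z(Ω))` replaced by a fixed vector `e`, on functionals. -/
def relaxedObj (k : ℕ) {r : ℝ} (hr : r ^ 2 < 1) (β α ε a : ℝ) (e : Euc k)
    (φ : WeakDual ℝ (Lp ℝ 2 (gaussMeasure k))) : ℝ :=
  relaxedForm k hr β α ε e φ - 2 * (1 + |α|) * |φ (momentL2 k 0) - a|

lemma problem2zFun_eq {n : ℕ} {ρ β α ε a : ℝ} (hr : Real.sqrt ρ ^ 2 < 1) (h0 : 0 < ρ) (h1 : ρ < 1)
    {Ω : Set (Euc (n + 1))} (hΩ : MeasurableSet Ω) {e : Euc (n + 1)}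
    (he : nuVec n (bary (n + 1) Ω) = e) :
    problem2zFun n ρ β α ε a Ω = relaxedObj (n + 1) hr β α ε a e (setFunctional hΩ) := by
  unfold problem2zFun relaxedObj relaxedForm
  rw [setFunctional_zero]
  simp_rw [setFunctional, toDualL2_ouKernel, toDualL2_pen]
  rw [integral_indicator_mul hΩ, noiseStability,
    integral_mul_ouOp h0 h1 (measurable_one_indicator hΩ) (C := 1) (fun x => by
      rw [abs_of_nonneg (indicator_one_nonneg Ω x)]; exact indicator_one_le Ω x)]
  unfold penaltyFun pen
  rw [he]

/-! ### Rotations -/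

lemma integral_comp_gauss {k : ℕ} (R : Euc k ≃ₗᵢ[ℝ] Euc k) {F : Type*} [NormedAddCommGroup F]
    [NormedSpace ℝ F] (g : Euc k → F) :
    ∫ x, g (R x) ∂(gaussMeasure k) = ∫ x, g x ∂(gaussMeasure k) :=
  (measurePreserving_gauss R).integral_comp R.toHomeomorph.measurableEmbedding g

lemma ouOp_rotate {k : ℕ} (R : Euc k ≃ₗᵢ[ℝ] Euc k) (ρ : ℝ) (f : Euc k → ℝ) (x : Euc k) :
    ouOp k ρ (fun y => f (R y)) x = ouOp k ρ f (R x) := by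
  unfold ouOp
  simp only [map_add, map_smul]
  exact integral_comp_gauss R fun y => f (ρ • R x + Real.sqrt (1 - ρ ^ 2) • y)

lemma noiseStability_rotate {k : ℕ} (R : Euc k ≃ₗᵢ[ℝ] Euc k) (ρ : ℝ) (Ω : Set (Euc k)) :
    noiseStability k ρ (R ⁻¹' Ω) = noiseStability k ρ Ω := by
  unfold noiseStability
  have h : (R ⁻¹' Ω).indicator (fun _ => (1 : ℝ)) =
      fun x => Ω.indicator (fun _ => (1 : ℝ)) (R x) := rfl
  simp_rw [h, ouOp_rotate]
  exact integral_comp_gauss R fun x => Ω.indicator (fun _ => (1 : ℝ)) x *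
    ouOp k ρ (Ω.indicator fun _ => (1 : ℝ)) x

lemma setIntegral_rotate {k : ℕ} (R : Euc k ≃ₗᵢ[ℝ] Euc k) {F : Type*} [NormedAddCommGroup F]
    [NormedSpace ℝ F] (Ω : Set (Euc k)) (g : Euc k → F) :
    ∫ x in R ⁻¹' Ω, g (R x) ∂(gaussMeasure k) = ∫ x in Ω, g x ∂(gaussMeasure k) :=
  (measurePreserving_gauss R).setIntegral_preimage_emb R.toHomeomorph.measurableEmbedding g Ω

lemma bary_rotate {k : ℕ} (R : Euc k ≃ₗᵢ[ℝ] Euc k) (Ω : Set (Euc k)) :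
    bary k (R ⁻¹' Ω) = R.symm (bary k Ω) := by
  unfold bary
  have := setIntegral_rotate R Ω (fun x => R.symm x)
  simp only [LinearIsometryEquiv.symm_apply_apply] at this
  rw [this]
  exact R.symm.toContinuousLinearEquiv.integral_comp_comm fun x => x

lemma problem2zFun_rotate {n : ℕ} (R : Euc (n + 1) ≃ₗᵢ[ℝ] Euc (n + 1)) (ρ β α ε a : ℝ)
    (Ω : Set (Euc (n + 1)))
    (h : nuVec n (bary (n + 1) (R ⁻¹' Ω)) = R.symm (nuVec n (bary (n + 1) Ω))) :
    problem2zFun n ρ β α ε a (R ⁻¹' Ω) = problem2zFun n ρ β α ε a Ω := by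
  have hp : penaltyFun n β α (R ⁻¹' Ω) = penaltyFun n β α Ω := by
    unfold penaltyFun
    rw [h, ← setIntegral_rotate R Ω]
    congr 1 with x
    rw [← R.inner_map_map, LinearIsometryEquiv.apply_symm_apply]
  unfold problem2zFun
  rw [hp, noiseStability_rotate,
    (measurePreserving_gauss R).measure_preimage_emb R.toHomeomorph.measurableEmbedding]

/-- A vector on the nonnegative first half-axis has direction `(1, 0, …, 0)`; for the zero vector
this is the convention defining `nuVec`. -/
lemma nuVec_eq {n : ℕ} {z : Euc (n + 1)} (h : ∀ i : Fin n, z i.succ = 0) (h0 : 0 ≤ z 0) :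
    nuVec n z = EuclideanSpace.single 0 1 := by
  unfold nuVec
  split_ifs with hz
  · rfl
  have hz' : z = z 0 • EuclideanSpace.single 0 (1 : ℝ) := by
    ext i
    refine Fin.cases ?_ (fun i => ?_) i
    · simp
    · simp [h i]
  have hn : ‖z‖ = z 0 := by
    rw [hz', norm_smul]; simp [abs_of_nonneg h0]
  have hne : z 0 ≠ 0 := by rw [← hn]; exact norm_ne_zero_iff.2 hz
  rw [hn]
  nth_rewrite 2 [hz']
  rw [smul_smul, inv_mul_cancel₀ hne, one_smul]

/-- Every set can be rotated so that its barycenter lies on the nonnegative first half-axis. -/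
lemma exists_rotation {n : ℕ} (ρ β α ε a : ℝ) {Ω : Set (Euc (n + 1))} (hΩ : MeasurableSet Ω) :
    ∃ Ω' : Set (Euc (n + 1)), MeasurableSet Ω' ∧
      problem2zFun n ρ β α ε a Ω' = problem2zFun n ρ β α ε a Ω ∧
      (∀ i : Fin n, bary (n + 1) Ω' i.succ = 0) ∧ 0 ≤ bary (n + 1) Ω' 0 := by
  set z := bary (n + 1) Ω with hz
  by_cases h : z = 0
  · exact ⟨Ω, hΩ, rfl, fun i => by rw [← hz, h]; rfl, by rw [← hz, h]; rfl⟩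
  have hν : nuVec n z = ‖z‖⁻¹ • z := if_neg h
  set e : Euc (n + 1) := EuclideanSpace.single 0 1 with he
  have hnorm : ‖nuVec n z‖ = ‖e‖ := by
    rw [hν, norm_smul, norm_inv, norm_norm, inv_mul_cancel₀ (norm_ne_zero_iff.2 h)]
    simp [he]
  let S : Euc (n + 1) ≃ₗᵢ[ℝ] Euc (n + 1) := (ℝ ∙ (nuVec n z - e))ᗮ.reflection
  have hS : S (nuVec n z) = e := Submodule.reflection_sub hnorm
  have hb : bary (n + 1) (S.symm ⁻¹' Ω) = ‖z‖ • e := by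
    rw [bary_rotate, LinearIsometryEquiv.symm_symm, ← hz, ← hS, ← map_smul, hν, smul_smul,
      mul_inv_cancel₀ (norm_ne_zero_iff.2 h), one_smul]
  have h1 : ∀ i : Fin n, bary (n + 1) (S.symm ⁻¹' Ω) i.succ = 0 := fun i => by
    rw [hb]; simp [he]
  have h2 : 0 ≤ bary (n + 1) (S.symm ⁻¹' Ω) 0 := by
    rw [hb]; simp [he]
  refine ⟨S.symm ⁻¹' Ω, S.symm.continuous.measurable hΩ, ?_, h1, h2⟩
  refine problem2zFun_rotate S.symm ρ β α ε a Ω ?_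
  rw [nuVec_eq h1 h2, LinearIsometryEquiv.symm_symm, ← hz, hS]

/-! ### Extreme points of the set of maximizers -/

/-- The functionals of `[0,1]`-valued functions whose barycenter lies on the nonnegative first
half-axis. -/
def admissible (n : ℕ) : Set (WeakDual ℝ (Lp ℝ 2 (gaussMeasure (n + 1)))) :=
  unitFunctionals (gaussMeasure (n + 1)) ∩
    {φ | (∀ i : Fin n, φ (momentL2 (n + 1) i.succ.succ) = 0) ∧
      0 ≤ φ (momentL2 (n + 1) (Fin.succ 0))}

lemma isCompact_admissible (n : ℕ) : IsCompact (admissible n) := by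
  refine isCompact_unitFunctionals.inter_right ?_
  rw [ofPred_and, ofPred_forall]
  exact (isClosed_iInter fun i => isClosed_eq (WeakDual.eval_continuous _) continuous_const).inter
    (isClosed_le continuous_const (WeakDual.eval_continuous _))

/-- If `φ₀` maximizes the relaxed form among functionals with its moments, then so does the
indicator of some set with those moments. The set comes from an extreme point of the compact set of
all such maximizers: by convexity of the form, a perturbation with vanishing moments would stay
inside that set in both directions. -/
lemma exists_set_functional {n : ℕ} {ρ β α ε : ℝ} (hr : Real.sqrt ρ ^ 2 < 1) (hβ : 0 < β)
    (hβρ : β < ρ) (hρ : ρ < 1) (hε : ε ≤ 1) {e : Euc (n + 1)} (he : ‖e‖ = 1)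
    {φ₀ : WeakDual ℝ (Lp ℝ 2 (gaussMeasure (n + 1)))}
    (hφ₀ : φ₀ ∈ unitFunctionals (gaussMeasure (n + 1)))
    (hmax : ∀ φ ∈ unitFunctionals (gaussMeasure (n + 1)),
      (∀ l, φ (momentL2 (n + 1) l) = φ₀ (momentL2 (n + 1) l)) →
      relaxedForm (n + 1) hr β α ε e φ ≤ relaxedForm (n + 1) hr β α ε e φ₀) :
    ∃ (Ω : Set (Euc (n + 1))) (hΩ : MeasurableSet Ω),
      (∀ l, setFunctional hΩ (momentL2 (n + 1) l) = φ₀ (momentL2 (n + 1) l)) ∧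
      relaxedForm (n + 1) hr β α ε e φ₀ ≤ relaxedForm (n + 1) hr β α ε e (setFunctional hΩ) := by
  set K := unitFunctionals (gaussMeasure (n + 1)) with hK
  set Q := relaxedForm (n + 1) hr β α ε e with hQ
  set C : Set (WeakDual ℝ (Lp ℝ 2 (gaussMeasure (n + 1)))) :=
    {φ | ∀ l, φ (momentL2 (n + 1) l) = φ₀ (momentL2 (n + 1) l)} with hC
  have hCcl : IsClosed C := by
    rw [hC, ofPred_forall]
    exact isClosed_iInter fun l => isClosed_eq (WeakDual.eval_continuous _) continuous_const
  have hKc : IsCompact K := isCompact_unitFunctionals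
  -- By `hmax`, the inequality `Q φ₀ ≤ Q φ` selects exactly the maximizers.
  set S := (K ∩ Q ⁻¹' Ici (Q φ₀)) ∩ C with hS
  have hSc : IsCompact S := by
    refine IsCompact.inter_right ?_ hCcl
    exact hKc.of_isClosed_subset
      ((continuousOn_relaxedForm (n + 1) hr β α ε e).preimage_isClosed_of_isClosed
        hKc.isClosed isClosed_Ici) inter_subset_left
  have hSne : S.Nonempty := ⟨φ₀, ⟨hφ₀, le_refl (Q φ₀)⟩, fun l => rfl⟩
  have : LocallyConvexSpace ℝ (WeakDual ℝ (Lp ℝ 2 (gaussMeasure (n + 1)))) :=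
    inferInstanceAs (LocallyConvexSpace ℝ
      (WeakBilin (topDualPairing ℝ (Lp ℝ 2 (gaussMeasure (n + 1))))))
  obtain ⟨φ₁, hφ₁S, hext⟩ := hSc.extremePoints_nonempty hSne
  obtain ⟨⟨hφ₁K, hφ₁Q⟩, hφ₁C⟩ := hφ₁S
  obtain ⟨f, hf, h0, h1, hrep⟩ := exists_rep hφ₁K
  obtain ⟨h, hh, hbd, hmom, hconc⟩ := exists_perturbation n (moment (n + 1))
    (fun l => (memLp_moment (n + 1) l).integrable one_le_two) hf h0 h1
  have hb0 : ∀ x, |h x| ≤ f x := fun x => (hbd x).trans (min_le_left _ _)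
  have hb1 : ∀ x, |h x| ≤ 1 - f x := fun x => (hbd x).trans (min_le_right _ _)
  have hfb : ∀ x, |f x| ≤ 1 := fun x => by rw [abs_of_nonneg (h0 x)]; exact h1 x
  have hhb : ∀ x, |h x| ≤ 1 := fun x => (hb0 x).trans (h1 x)
  have hfL := memLp_of_bdd hf hfb 2
  have hhL := memLp_of_bdd hh hhb 2
  have hp0 : ∀ x, 0 ≤ (f + h) x := fun x => by
    have := (abs_le.1 (hb0 x)).1; simp only [Pi.add_apply]; linarith
  have hp1 : ∀ x, (f + h) x ≤ 1 := fun x => by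
    have := (abs_le.1 (hb1 x)).2; simp only [Pi.add_apply]; linarith
  have hm0 : ∀ x, 0 ≤ (f - h) x := fun x => by
    have := (abs_le.1 (hb0 x)).2; simp only [Pi.sub_apply]; linarith
  have hm1 : ∀ x, (f - h) x ≤ 1 := fun x => by
    have := (abs_le.1 (hb1 x)).1; simp only [Pi.sub_apply]; linarith
  set η := toDualL2 (μ := gaussMeasure (n + 1)) h hhL with hη
  set φp := toDualL2 (μ := gaussMeasure (n + 1)) (f + h) (memLp_unit (hf.add hh) hp0 hp1) with hφp
  set φm := toDualL2 (μ := gaussMeasure (n + 1)) (f - h) (memLp_unit (hf.sub hh) hm0 hm1) with hφm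
  have e1 : φp = φ₁ + η := by rw [hrep]; exact toDualL2_add hfL hhL
  have e2 : φm + η = φ₁ := by
    rw [hrep, hφm, hη, ← toDualL2_add]
    exact toDualL2_congr _ _ (by simp)
  have hηm : ∀ l, η (momentL2 (n + 1) l) = 0 := fun l => by
    rw [hη, toDualL2_moment]; exact hmom l
  have hpK : φp ∈ K := toDualL2_mem (hf.add hh) hp0 hp1
  have hmK : φm ∈ K := toDualL2_mem (hf.sub hh) hm0 hm1
  have hpC : φp ∈ C := fun l => by
    have : φp (momentL2 (n + 1) l) = φ₁ (momentL2 (n + 1) l) + η (momentL2 (n + 1) l) := by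
      rw [e1]; rfl
    rw [this, hηm, add_zero, hφ₁C l]
  have hmC : φm ∈ C := fun l => by
    have : φ₁ (momentL2 (n + 1) l) = φm (momentL2 (n + 1) l) + η (momentL2 (n + 1) l) := by
      rw [← e2]; rfl
    rw [hηm, add_zero] at this
    rw [← this, hφ₁C l]
  have hconv : 2 * Q φ₁ ≤ Q φp + Q φm :=
    relaxedForm_second_difference hr hβ hβρ hρ hε he hf hh hfb hhb hrep hη e1 e2
  have hφ₁Q' : Q φ₀ ≤ Q φ₁ := hφ₁Q
  have hpS : φp ∈ S := ⟨⟨hpK, by have := hmax φm hmK hmC; change Q φ₀ ≤ Q φp; linarith⟩, hpC⟩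
  have hmS : φm ∈ S := ⟨⟨hmK, by have := hmax φp hpK hpC; change Q φ₀ ≤ Q φm; linarith⟩, hmC⟩
  have hseg : φ₁ ∈ openSegment ℝ φp φm := by
    refine ⟨1 / 2, 1 / 2, by norm_num, by norm_num, by norm_num, ?_⟩
    have : φ₁ = (1 / 2 : ℝ) • (φ₁ + φ₁) := by
      rw [← two_smul ℝ φ₁, smul_smul]; norm_num
    rw [this, ← smul_add, e1]
    congr 1
    nth_rewrite 3 [← e2]
    abel
  have hpe : φp = φ₁ := hext hpS hmS hseg
  have hh0 : h =ᵐ[gaussMeasure (n + 1)] 0 := by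
    have : f + h =ᵐ[gaussMeasure (n + 1)] f :=
      toDualL2_injective _ (memLp_unit hf h0 h1) (by rw [← hrep, ← hpe])
    filter_upwards [this] with x hx
    simpa using hx
  have hΩ : MeasurableSet {x | f x = 1} := hf (measurableSet_singleton 1)
  have heq : setFunctional hΩ = φ₁ := by
    rw [hrep]
    refine toDualL2_congr _ _ ?_
    filter_upwards [hconc hh0] with x hx
    rcases hx with hx | hx <;> simp [indicator, hx]
  exact ⟨_, hΩ, fun l => by rw [heq]; exact hφ₁C l, by rw [heq]; exact hφ₁Q'⟩

/-! ### Existence of a maximizer -/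

/-- Existence of a maximizer of Problem 2z (Lemma 3.5). -/
theorem exists_maximizer_problem2z
    (n : ℕ) (ρ β a α ε : ℝ)
    (hβ0 : 0 < β) (hβρ : β < ρ) (hρ1 : ρ < 1)
    (ha0 : 0 < a) (ha1 : a < 1) (hα : Phi (-α) = a)
    (hε0 : 0 < ε)
    (hε : ε ≤ Real.exp (-α ^ 2 * max 0 (β / (2 * (ρ - β)) - 1 / 2))) :
    ∃ Ω : Set (Euc (n + 1)), MeasurableSet Ω ∧
      ∀ Ω' : Set (Euc (n + 1)), MeasurableSet Ω' →
        problem2zFun n ρ β α ε a Ω' ≤ problem2zFun n ρ β α ε a Ω := by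
  have hρ0 : 0 < ρ := hβ0.trans hβρ
  have hr : Real.sqrt ρ ^ 2 < 1 := by rw [Real.sq_sqrt hρ0.le]; exact hρ1
  have hε1 : ε ≤ 1 := by
    refine hε.trans (Real.exp_le_one_iff.2 ?_)
    have := mul_nonneg (sq_nonneg α) (le_max_left 0 (β / (2 * (ρ - β)) - 1 / 2))
    linarith
  set e : Euc (n + 1) := EuclideanSpace.single 0 1 with he
  have he1 : ‖e‖ = 1 := by simp [he]
  have hcont : ContinuousOn (relaxedObj (n + 1) hr β α ε a e) (admissible n) := by
    refine ((continuousOn_relaxedForm (n + 1) hr β α ε e).mono inter_subset_left).sub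
      (Continuous.continuousOn ?_)
    exact continuous_const.mul ((WeakDual.eval_continuous _).sub continuous_const).abs
  have hmem : ∀ (Ω : Set (Euc (n + 1))) (hΩ : MeasurableSet Ω),
      (∀ i : Fin n, bary (n + 1) Ω i.succ = 0) → 0 ≤ bary (n + 1) Ω 0 →
      setFunctional hΩ ∈ admissible n := fun Ω hΩ h1 h0 =>
    ⟨setFunctional_mem hΩ, fun i => by rw [setFunctional_succ, h1],
      by rw [setFunctional_succ]; exact h0⟩
  have hne : (admissible n).Nonempty :=
    ⟨_, hmem ∅ MeasurableSet.empty (by simp [bary]) (by simp [bary])⟩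
  obtain ⟨φ₀, hφ₀, hφ₀max⟩ := (isCompact_admissible n).exists_isMaxOn hne hcont
  obtain ⟨Ω, hΩ, hmom, hval⟩ := exists_set_functional hr hβ0 hβρ hρ1 hε1 (α := α) he1 hφ₀.1
    fun φ hφ hm => by
      have hφA : φ ∈ admissible n :=
        ⟨hφ, fun i => by rw [hm]; exact hφ₀.2.1 i, by rw [hm]; exact hφ₀.2.2⟩
      have h : relaxedObj (n + 1) hr β α ε a e φ ≤ relaxedObj (n + 1) hr β α ε a e φ₀ :=
        hφ₀max hφA
      unfold relaxedObj at h
      rw [hm 0] at h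
      linarith
  have hΩν : nuVec n (bary (n + 1) Ω) = e := by
    refine nuVec_eq (fun i => ?_) ?_
    · rw [← setFunctional_succ hΩ, hmom]; exact hφ₀.2.1 i
    · rw [← setFunctional_succ hΩ, hmom]; exact hφ₀.2.2
  refine ⟨Ω, hΩ, fun Ω' hΩ' => ?_⟩
  obtain ⟨Ω'', hΩ'', hF, h1, h0⟩ := exists_rotation ρ β α ε a hΩ'
  rw [← hF, problem2zFun_eq hr hρ0 hρ1 hΩ'' (nuVec_eq h1 h0), problem2zFun_eq hr hρ0 hρ1 hΩ hΩν]
  have h : relaxedObj (n + 1) hr β α ε a e (setFunctional hΩ'') ≤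
      relaxedObj (n + 1) hr β α ε a e φ₀ := hφ₀max (hmem Ω'' hΩ'' h1 h0)
  refine h.trans ?_
  unfold relaxedObj
  rw [hmom 0]
  linarith
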